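/- arXiv:2201.03487 — 5 statements merged into one kernel-verified Lean document; each statement's English description precedes it below -/
import Mathlib

section
/- Let V be a normed real vector space, α ∈ (0,1] and t ∈ (0,1). Let A be a V-valued function on the set of segments {(x,v) : x ∈ ℝ³, v ∈ ℝ³, ‖v‖ ≤ 1/4} which is additive, i.e. A(x,v) = A(x,cv) + A(x+cv,(1−c)v) for every segment (x,v) and every c ∈ [0,1]. If M ≥ 0 is such that ‖A(x,v)‖ ≤ M‖v‖^α for every segment with 0 < ‖v‖ < t, then ‖A(x,v)‖ ≤ t^{−(1−α)} M ‖v‖^α for every segment with 0 < ‖v‖ ≤ 1/4. Equivalently, |A|_α ≤ t^{−(1−α)} |A|_{α;<t}. -/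
/-!
Cut a segment of length `r` into `n = ⌊r / t⌋ + 1` equal pieces, each shorter than `t`. Additivity
and the triangle inequality give `‖A (x, v)‖ ≤ n * M * (r / n) ^ α = n ^ (1 - α) * M * r ^ α`, and
`n ≤ 1 / t`: if `r < t` then `n = 1`, and otherwise `t ≤ r ≤ 1 / 2`, so `n ≤ (r + t) / t ≤ 1 / t`.
-/

open Finset

/-- Additivity of a function `A` of the segments from `x` to `x + v` of length `‖v‖ ≤ R`, under
cutting at an intermediate point. `A` is encoded as a total function of `x` and `v`, and its values
at longer segments are unconstrained. -/
def IsAdditiveOnSegments {E V : Type*} [SeminormedAddCommGroup E] [NormedSpace ℝ E] [Add V]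
    (A : E → E → V) (R : ℝ) : Prop :=
  ∀ x v : E, ‖v‖ ≤ R → ∀ c ∈ Set.Icc (0 : ℝ) 1, A x v = A x (c • v) + A (x + c • v) ((1 - c) • v)

namespace IsAdditiveOnSegments

variable {E V : Type*} [SeminormedAddCommGroup E] [NormedSpace ℝ E] {R : ℝ} {A : E → E → V}

theorem apply_zero [AddGroup V] (hA : IsAdditiveOnSegments A R) (hR : 0 ≤ R) (x : E) :
    A x 0 = 0 := by
  simpa using hA x 0 (by simpa using hR) 0 (by simp)

theorem apply_succ_nsmul [Add V] (hA : IsAdditiveOnSegments A R) (x : E) {w : E} {n : ℕ}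
    (hw : ‖(n + 1) • w‖ ≤ R) : A x ((n + 1) • w) = A x (n • w) + A (x + n • w) w := by
  have hn : (n : ℝ) + 1 ≠ 0 := by positivity
  have hc : (n : ℝ) / (n + 1) ∈ Set.Icc (0 : ℝ) 1 :=
    ⟨by positivity, div_le_one_of_le₀ (by linarith) (by positivity)⟩
  have initial_piece : ((n : ℝ) / (n + 1)) • (n + 1) • w = n • w := by
    rw [← Nat.cast_smul_eq_nsmul ℝ (n + 1), ← Nat.cast_smul_eq_nsmul ℝ n, smul_smul,
      Nat.cast_succ, div_mul_cancel₀ _ hn]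
  have final_piece : (1 - (n : ℝ) / (n + 1)) • (n + 1) • w = w := by
    rw [sub_smul, one_smul, initial_piece, succ_nsmul, add_sub_cancel_left]
  simpa only [initial_piece, final_piece] using hA x ((n + 1) • w) hw _ hc

theorem apply_nsmul_eq_sum [AddCommGroup V] (hA : IsAdditiveOnSegments A R) (x : E) {w : E}
    {n : ℕ} (hw : ‖n • w‖ ≤ R) : A x (n • w) = ∑ i ∈ range n, A (x + i • w) w := by
  induction n with
  | zero =>
    rw [zero_nsmul, range_zero, sum_empty, hA.apply_zero ((norm_nonneg _).trans hw)]
  | succ n ih =>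
    have hw' : ‖n • w‖ ≤ R := by
      refine le_trans ?_ hw
      rw [← Nat.cast_smul_eq_nsmul ℝ n, ← Nat.cast_smul_eq_nsmul ℝ (n + 1),
        norm_smul_of_nonneg n.cast_nonneg, norm_smul_of_nonneg (n + 1).cast_nonneg]
      gcongr
      exact n.le_succ
    rw [hA.apply_succ_nsmul x hw, ih hw', sum_range_succ]

variable [SeminormedAddCommGroup V]

theorem norm_apply_le_natCast_mul (hA : IsAdditiveOnSegments A R) (x : E) {v : E} (hv : ‖v‖ ≤ R)
    {n : ℕ} (hn : n ≠ 0) {C : ℝ} (hC : ∀ y, ‖A y ((n : ℝ)⁻¹ • v)‖ ≤ C) : ‖A x v‖ ≤ n * C := by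
  have hsmul : n • (n : ℝ)⁻¹ • v = v := by
    rw [← Nat.cast_smul_eq_nsmul ℝ, smul_inv_smul₀ (Nat.cast_ne_zero.2 hn)]
  calc ‖A x v‖ = ‖∑ i ∈ range n, A (x + i • (n : ℝ)⁻¹ • v) ((n : ℝ)⁻¹ • v)‖ := by
        rw [← hA.apply_nsmul_eq_sum x (hsmul.symm ▸ hv), hsmul]
    _ ≤ ∑ _i ∈ range n, C := norm_sum_le_of_le _ fun _ _ ↦ hC _
    _ = n * C := by rw [sum_const, card_range, nsmul_eq_mul]

theorem norm_apply_le_natCast_rpow_mul (hA : IsAdditiveOnSegments A R) (x : E) {v : E}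
    (hv : ‖v‖ ≤ R) {n : ℕ} (hn : n ≠ 0) {M α : ℝ}
    (hM : ∀ y, ‖A y ((n : ℝ)⁻¹ • v)‖ ≤ M * ‖(n : ℝ)⁻¹ • v‖ ^ α) :
    ‖A x v‖ ≤ (n : ℝ) ^ (1 - α) * (M * ‖v‖ ^ α) := by
  have hn' : (0 : ℝ) < n := by positivity
  calc ‖A x v‖ ≤ n * (M * ‖(n : ℝ)⁻¹ • v‖ ^ α) := hA.norm_apply_le_natCast_mul x hv hn hM
    _ = n * (M * (((n : ℝ) ^ α)⁻¹ * ‖v‖ ^ α)) := by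
        rw [norm_smul_of_nonneg (by positivity), Real.mul_rpow (by positivity) (norm_nonneg v),
          Real.inv_rpow hn'.le]
    _ = (n : ℝ) ^ (1 - α) * (M * ‖v‖ ^ α) := by
        rw [Real.rpow_sub hn', Real.rpow_one]
        ring

end IsAdditiveOnSegments

theorem natFloor_div_add_one_le_inv {𝕜 : Type*} [Field 𝕜] [LinearOrder 𝕜] [IsStrictOrderedRing 𝕜]
    [FloorSemiring 𝕜] {r t : 𝕜} (hr : r ≤ 1 / 2) (ht₀ : 0 < t) (ht₁ : t ≤ 1) :
    (⌊r / t⌋₊ : 𝕜) + 1 ≤ t⁻¹ := by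
  rcases lt_or_ge r t with hrt | htr
  · rw [Nat.floor_eq_zero.2 ((div_lt_one ht₀).2 hrt), Nat.cast_zero, zero_add]
    exact (one_le_inv₀ ht₀).2 ht₁
  · calc (⌊r / t⌋₊ : 𝕜) + 1 ≤ r / t + 1 := by
          gcongr
          exact Nat.floor_le (div_nonneg (ht₀.le.trans htr) ht₀.le)
      _ = (r + t) / t := by rw [add_div, div_self ht₀.ne']
      _ ≤ 1 / t := by
          gcongr
          linarith
      _ = t⁻¹ := one_div t

theorem stmt_5_general {E V : Type*} [SeminormedAddCommGroup E] [NormedSpace ℝ E]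
    [SeminormedAddCommGroup V] {R α t M : ℝ} (hR : R ≤ 1 / 2) (hα : α ≤ 1) (ht₀ : 0 < t)
    (ht₁ : t ≤ 1) {A : E → E → V} (hA : IsAdditiveOnSegments A R)
    (hshort : ∀ x v : E, 0 < ‖v‖ → ‖v‖ < t → ‖v‖ ≤ R → ‖A x v‖ ≤ M * ‖v‖ ^ α)
    (x v : E) (hv₀ : 0 < ‖v‖) (hv : ‖v‖ ≤ R) :
    ‖A x v‖ ≤ t ^ (-(1 - α)) * M * ‖v‖ ^ α := by
  set n : ℕ := ⌊‖v‖ / t⌋₊ + 1 with hn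
  have hn_ne : n ≠ 0 := Nat.succ_ne_zero _
  have hn_le : (n : ℝ) ≤ t⁻¹ := by
    simpa only [hn, Nat.cast_succ] using natFloor_div_add_one_le_inv (hv.trans hR) ht₀ ht₁
  have hn_one : 1 ≤ (n : ℝ) := by simp [hn]
  have norm_piece : ‖(n : ℝ)⁻¹ • v‖ = ‖v‖ / n := by
    rw [norm_smul_of_nonneg (by positivity), inv_mul_eq_div]
  have piece_lt : ‖v‖ / n < t := by
    rw [div_lt_comm₀ (by positivity) ht₀, hn, Nat.cast_succ]
    exact Nat.lt_floor_add_one _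
  have hpieces : ‖A x v‖ ≤ (n : ℝ) ^ (1 - α) * (M * ‖v‖ ^ α) :=
    hA.norm_apply_le_natCast_rpow_mul x hv hn_ne fun y ↦
      hshort y _ (norm_piece ▸ by positivity) (norm_piece ▸ piece_lt)
        (norm_piece ▸ (div_le_self hv₀.le hn_one).trans hv)
  have hM : 0 ≤ M * ‖v‖ ^ α :=
    nonneg_of_mul_nonneg_right ((norm_nonneg _).trans hpieces) (by positivity)
  calc ‖A x v‖ ≤ (n : ℝ) ^ (1 - α) * (M * ‖v‖ ^ α) := hpieces
    _ ≤ t⁻¹ ^ (1 - α) * (M * ‖v‖ ^ α) := by gcongr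
    _ = t ^ (-(1 - α)) * M * ‖v‖ ^ α := by
        rw [Real.inv_rpow ht₀.le, ← Real.rpow_neg ht₀.le, mul_assoc]

theorem stmt_5 {V : Type*} [NormedAddCommGroup V] [NormedSpace ℝ V]
    (α t : ℝ) (hα : α ∈ Set.Ioc (0:ℝ) 1) (ht : t ∈ Set.Ioo (0:ℝ) 1)
    (A : EuclideanSpace ℝ (Fin 3) → EuclideanSpace ℝ (Fin 3) → V)
    (hadd : ∀ (x v : EuclideanSpace ℝ (Fin 3)), ‖v‖ ≤ 1/4 →
      ∀ c ∈ Set.Icc (0:ℝ) 1, A x v = A x (c • v) + A (x + c • v) ((1 - c) • v))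
    (M : ℝ) (hM : 0 ≤ M)
    (hshort : ∀ (x v : EuclideanSpace ℝ (Fin 3)), 0 < ‖v‖ → ‖v‖ < t → ‖v‖ ≤ 1/4 →
      ‖A x v‖ ≤ M * ‖v‖ ^ α) :
    ∀ (x v : EuclideanSpace ℝ (Fin 3)), 0 < ‖v‖ → ‖v‖ ≤ 1/4 →
      ‖A x v‖ ≤ t ^ (-(1 - α)) * M * ‖v‖ ^ α :=
  stmt_5_general (by norm_num) hα.2 ht.1 ht.2.le hadd hshort
end

section
/- Let G_τ(x) := ∑_{m∈ℤ³} (4πτ)^{−3/2} exp(−‖x+m‖²/(4τ)) for τ > 0 and x ∈ ℝ³ denote the heat kernel on the torus 𝕋³ = ℝ³/ℤ³, and for r,s ≥ 0 set C_{r,s}(x) := ∫₀^{min(r,s)} G_{r+s−2u}(x) du (equal to 0 if min(r,s)=0). Then for every T > 0 there exists C > 0 such that for all r,s ∈ [0,T] and all x ∈ ℝ³ with δ(x) := dist(x,ℤ³) > 0: (a) 0 ≤ C_{r,s}(x) ≤ C δ(x)^{−1}; and (b) |C_{r,r}(x) − C_{r,s}(x)| ≤ C |r−s|^{1/2} δ(x)^{−2}.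 -/
noncomputable section

/-- The lattice point of `ℝ³` associated to `m ∈ ℤ³`. -/
def latt3 (m : Fin 3 → ℤ) : EuclideanSpace ℝ (Fin 3) :=
  (WithLp.equiv 2 (Fin 3 → ℝ)).symm fun i => (m i : ℝ)

/-- The heat kernel `G_τ(x) = ∑_{m ∈ ℤ³} (4πτ)^{−3/2} exp(−‖x+m‖²/(4τ))` on the torus
`𝕋³ = ℝ³/ℤ³`. -/
def heatT (τ : ℝ) (x : EuclideanSpace ℝ (Fin 3)) : ℝ :=
  ∑' m : Fin 3 → ℤ,
    (4 * Real.pi * τ) ^ (-(3:ℝ)/2) * Real.exp (-‖x + latt3 m‖ ^ 2 / (4 * τ))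

/-- The covariance `C_{r,s}(x) = ∫₀^{min(r,s)} G_{r+s−2u}(x) du`. -/
def covK (r s : ℝ) (x : EuclideanSpace ℝ (Fin 3)) : ℝ :=
  ∫ u in (0:ℝ)..(min r s), heatT (r + s - 2 * u) x

/-!
Split the exponent `‖x + m‖² / (4τ)` into two halves: one is at least `δ² / (8τ)`, and the
other is at least `‖x + m‖² / (8S)` for `τ ≤ S`. Hence `G_τ(x) ≤ K τ^(-3/2) exp (-δ² / (8τ))`,
where `K` bounds the lattice Gaussian sum at scale `S` uniformly in `x`, and therefore
`G_τ(x) ≤ 8 K / (√τ (τ + δ²))`.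

The substitution `τ = r + s - 2u` turns `C_{r,s}` into `½ ∫ G_τ dτ` over `[|r - s|, r + s]`.
For (a), `1 / (√τ (τ + δ²))` has the bounded primitive `(2 / δ) arctan (√τ / δ)`. For (b), the
domains of integration of `C_{r,r}` and `C_{r,s}` differ by the two intervals `[0, |r - s|]`
and `[2r, r + s]` of length `|r - s|`, over which `G_τ ≤ 8 K δ⁻² τ^(-1/2)` is integrated.
-/

open MeasureTheory

section GaussianSums

theorem summable_exp_neg_mul_int_sq {c : ℝ} (hc : 0 < c) :
    Summable fun n : ℤ => Real.exp (-c * (n : ℝ) ^ 2) := by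
  refine (summable_pow_mul_jacobiTheta₂_term_bound 0 (div_pos hc Real.pi_pos) 0).congr fun n => ?_
  rw [pow_zero, one_mul]
  congr 1
  field_simp
  ring

theorem summable_pi_prod {ι κ : Type*} [Fintype ι] {f : ι → κ → ℝ} (hf : ∀ i k, 0 ≤ f i k)
    (hs : ∀ i, Summable (f i)) : Summable fun m : ι → κ => ∏ i, f i (m i) := by
  classical
  refine summable_of_sum_le (c := ∏ i, ∑' k, f i k)
    (fun m => Finset.prod_nonneg fun i _ => hf i (m i)) fun u => ?_
  have hu : u ⊆ Fintype.piFinset fun i => u.image (· i) := fun m hm =>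
    Fintype.mem_piFinset.2 fun i => Finset.mem_image_of_mem (· i) hm
  calc ∑ m ∈ u, ∏ i, f i (m i)
      ≤ ∑ m ∈ Fintype.piFinset fun i => u.image (· i), ∏ i, f i (m i) :=
        Finset.sum_le_sum_of_subset_of_nonneg hu fun m _ _ =>
          Finset.prod_nonneg fun i _ => hf i (m i)
    _ = ∏ i, ∑ k ∈ u.image (· i), f i k := (Finset.prod_univ_sum _ _).symm
    _ ≤ ∏ i, ∑' k, f i k :=
        Finset.prod_le_prod (fun i _ => Finset.sum_nonneg fun k _ => hf i k)
          fun i _ => (hs i).sum_le_tsum _ fun k _ => hf i k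

section Translation

variable {A E : Type*} [AddCommGroup A] [SeminormedAddCommGroup E] (f : A →+ E) {x : E} {k : A}

theorem norm_map_sub_le_two_mul_norm_add (hk : ∀ m, ‖x + f k‖ ≤ ‖x + f m‖) (m : A) :
    ‖f (m - k)‖ ≤ 2 * ‖x + f m‖ :=
  calc ‖f (m - k)‖ = ‖(x + f m) - (x + f k)‖ := by rw [map_sub, add_sub_add_left_eq_sub]
    _ ≤ ‖x + f m‖ + ‖x + f k‖ := norm_sub_le _ _
    _ ≤ 2 * ‖x + f m‖ := by linarith [hk m]

theorem exp_neg_mul_norm_add_sq_le (hk : ∀ m, ‖x + f k‖ ≤ ‖x + f m‖) {c : ℝ} (hc : 0 ≤ c) (m : A) :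
    Real.exp (-c * ‖x + f m‖ ^ 2) ≤ Real.exp (-(c / 4) * ‖f (m - k)‖ ^ 2) := by
  have hsq : ‖f (m - k)‖ ^ 2 ≤ (2 * ‖x + f m‖) ^ 2 := by
    gcongr
    exact norm_map_sub_le_two_mul_norm_add f hk m
  rw [Real.exp_le_exp]
  nlinarith

theorem summable_exp_neg_mul_norm_add_sq (hk : ∀ m, ‖x + f k‖ ≤ ‖x + f m‖) {c : ℝ} (hc : 0 ≤ c)
    (hs : Summable fun m => Real.exp (-(c / 4) * ‖f m‖ ^ 2)) :
    Summable fun m => Real.exp (-c * ‖x + f m‖ ^ 2) :=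
  .of_nonneg_of_le (fun _ => (Real.exp_pos _).le) (exp_neg_mul_norm_add_sq_le f hk hc)
    ((Equiv.subRight k).summable_iff.2 hs)

theorem tsum_exp_neg_mul_norm_add_sq_le (hk : ∀ m, ‖x + f k‖ ≤ ‖x + f m‖) {c : ℝ} (hc : 0 ≤ c)
    (hs : Summable fun m => Real.exp (-(c / 4) * ‖f m‖ ^ 2)) :
    ∑' m, Real.exp (-c * ‖x + f m‖ ^ 2) ≤ ∑' m, Real.exp (-(c / 4) * ‖f m‖ ^ 2) :=
  calc ∑' m, Real.exp (-c * ‖x + f m‖ ^ 2) ≤ ∑' m, Real.exp (-(c / 4) * ‖f (m - k)‖ ^ 2) :=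
        (summable_exp_neg_mul_norm_add_sq f hk hc hs).tsum_le_tsum
          (exp_neg_mul_norm_add_sq_le f hk hc) ((Equiv.subRight k).summable_iff.2 hs)
    _ = ∑' m, Real.exp (-(c / 4) * ‖f m‖ ^ 2) :=
        (Equiv.subRight k).tsum_eq fun m => Real.exp (-(c / 4) * ‖f m‖ ^ 2)

end Translation

theorem tsum_exp_neg_sq_div_le {ι : Type*} {ρ : ι → ℝ} {d τ S : ℝ} (hd : 0 ≤ d)
    (hρ : ∀ i, d ≤ ρ i) (hτ : 0 < τ) (hτS : τ ≤ S)
    (hs : Summable fun i => Real.exp (-(8 * S)⁻¹ * ρ i ^ 2)) :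
    ∑' i, Real.exp (-ρ i ^ 2 / (4 * τ)) ≤
      (∑' i, Real.exp (-(8 * S)⁻¹ * ρ i ^ 2)) * Real.exp (-(d ^ 2 / (8 * τ))) := by
  have hterm (i : ι) : Real.exp (-ρ i ^ 2 / (4 * τ)) ≤
      Real.exp (-(8 * S)⁻¹ * ρ i ^ 2) * Real.exp (-(d ^ 2 / (8 * τ))) := by
    have hhalves : ρ i ^ 2 / (4 * τ) = ρ i ^ 2 / (8 * τ) + (8 * τ)⁻¹ * ρ i ^ 2 := by
      field_simp
      ring
    have hdist : d ^ 2 / (8 * τ) ≤ ρ i ^ 2 / (8 * τ) := by gcongr; exact hρ i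
    have htime : (8 * S)⁻¹ * ρ i ^ 2 ≤ (8 * τ)⁻¹ * ρ i ^ 2 := by gcongr
    rw [← Real.exp_add, Real.exp_le_exp, neg_div]
    linarith
  have hmajorant := hs.mul_right (Real.exp (-(d ^ 2 / (8 * τ))))
  rw [← tsum_mul_right]
  exact (Summable.of_nonneg_of_le (fun _ => (Real.exp_pos _).le) hterm hmajorant).tsum_le_tsum
    hterm hmajorant

end GaussianSums

section IntegerLattice

variable {ι : Type*}

variable (ι) in
/-- The inclusion of the lattice `ℤ^ι` in Euclidean space; for `ι = Fin 3` it is `latt3`, now as an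
additive homomorphism. -/
def intLattice : (ι → ℤ) →+ EuclideanSpace ℝ ι where
  toFun m := WithLp.toLp 2 fun i => (m i : ℝ)
  map_zero' := by ext i; simp
  map_add' a b := by ext i; simp

variable [Fintype ι]

variable (ι) in
/-- The theta sum `∑_{m ∈ ℤ^ι} exp (-c ‖m‖²)` of the integer lattice, which supplies the constant in
the heat kernel bounds. -/
def latticeTheta (c : ℝ) : ℝ :=
  ∑' m, Real.exp (-c * ‖intLattice ι m‖ ^ 2)

theorem summable_latticeTheta {c : ℝ} (hc : 0 < c) :
    Summable fun m => Real.exp (-c * ‖intLattice ι m‖ ^ 2) := by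
  refine (summable_pi_prod (fun _ _ => (Real.exp_pos _).le)
    fun _ : ι => summable_exp_neg_mul_int_sq hc).congr fun m => ?_
  rw [EuclideanSpace.norm_sq_eq, Finset.mul_sum, Real.exp_sum]
  simp [intLattice]

theorem latticeTheta_pos {c : ℝ} (hc : 0 < c) : 0 < latticeTheta ι c :=
  (summable_latticeTheta hc).tsum_pos (fun _ => (Real.exp_pos _).le) 0 (Real.exp_pos _)

theorem exists_forall_norm_add_intLattice_le (x : EuclideanSpace ℝ ι) :
    ∃ k, ∀ m, ‖x + intLattice ι k‖ ≤ ‖x + intLattice ι m‖ := by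
  refine ⟨fun i => -round (x i), fun m => ?_⟩
  rw [EuclideanSpace.norm_eq, EuclideanSpace.norm_eq]
  gcongr with i
  simpa [intLattice, ← sub_eq_add_neg] using round_le (x i) (-m i)

theorem summable_exp_neg_mul_norm_add_intLattice_sq {c : ℝ} (hc : 0 < c)
    (x : EuclideanSpace ℝ ι) : Summable fun m => Real.exp (-c * ‖x + intLattice ι m‖ ^ 2) := by
  obtain ⟨k, hk⟩ := exists_forall_norm_add_intLattice_le x
  exact summable_exp_neg_mul_norm_add_sq _ hk hc.le (summable_latticeTheta (by positivity))

theorem tsum_exp_neg_mul_norm_add_intLattice_sq_le {c : ℝ} (hc : 0 < c)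
    (x : EuclideanSpace ℝ ι) :
    ∑' m, Real.exp (-c * ‖x + intLattice ι m‖ ^ 2) ≤ latticeTheta ι (c / 4) := by
  obtain ⟨k, hk⟩ := exists_forall_norm_add_intLattice_le x
  exact tsum_exp_neg_mul_norm_add_sq_le _ hk hc.le (summable_latticeTheta (by positivity))

theorem infDist_range_intLattice_le (x : EuclideanSpace ℝ ι) (m : ι → ℤ) :
    Metric.infDist x (Set.range (intLattice ι)) ≤ ‖x + intLattice ι m‖ := by
  simpa [dist_eq_norm] using
    Metric.infDist_le_dist_of_mem (x := x) (Set.mem_range_self (f := intLattice ι) (-m))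

theorem tsum_exp_neg_norm_add_intLattice_sq_div_le {τ S : ℝ} (hτ : 0 < τ) (hτS : τ ≤ S)
    (x : EuclideanSpace ℝ ι) :
    ∑' m, Real.exp (-‖x + intLattice ι m‖ ^ 2 / (4 * τ)) ≤
      latticeTheta ι ((8 * S)⁻¹ / 4) *
        Real.exp (-(Metric.infDist x (Set.range (intLattice ι)) ^ 2 / (8 * τ))) := by
  have hS : 0 < (8 * S)⁻¹ := by have := hτ.trans_le hτS; positivity
  refine (tsum_exp_neg_sq_div_le Metric.infDist_nonneg (infDist_range_intLattice_le x) hτ hτS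
    (summable_exp_neg_mul_norm_add_intLattice_sq hS x)).trans ?_
  gcongr
  exact tsum_exp_neg_mul_norm_add_intLattice_sq_le hS x

end IntegerLattice

section HeatKernel

variable {τ : ℝ} (x : EuclideanSpace ℝ (Fin 3))

theorem heatT_nonneg (hτ : 0 ≤ τ) : 0 ≤ heatT τ x :=
  tsum_nonneg fun _ => by positivity

theorem measurable_heatT : Measurable fun τ => heatT τ x := by
  unfold heatT
  fun_prop

theorem heatT_le_gaussian {S : ℝ} (hτ : 0 < τ) (hτS : τ ≤ S) :
    heatT τ x ≤ latticeTheta (Fin 3) ((8 * S)⁻¹ / 4) * (τ ^ (-(3 : ℝ) / 2) *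
      Real.exp (-(Metric.infDist x (Set.range latt3) ^ 2 / (8 * τ)))) := by
  have hprefactor : (4 * Real.pi * τ) ^ (-(3 : ℝ) / 2) ≤ τ ^ (-(3 : ℝ) / 2) :=
    Real.rpow_le_rpow_of_nonpos hτ (by nlinarith [Real.pi_gt_three]) (by norm_num)
  rw [heatT, tsum_mul_left, mul_left_comm]
  exact mul_le_mul hprefactor (tsum_exp_neg_norm_add_intLattice_sq_div_le hτ hτS x)
    (tsum_nonneg fun _ => (Real.exp_pos _).le) (by positivity)

theorem rpow_mul_exp_neg_sq_div_le (hτ : 0 < τ) (d : ℝ) :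
    τ ^ (-(3 : ℝ) / 2) * Real.exp (-(d ^ 2 / (8 * τ))) ≤ 8 / (√τ * (τ + d ^ 2)) := by
  have : 0 < √τ := Real.sqrt_pos.2 hτ
  have hpow : τ ^ (-(3 : ℝ) / 2) = (τ * √τ)⁻¹ := by
    rw [show -(3 : ℝ) / 2 = -(1 + 1 / 2) by norm_num, Real.rpow_neg hτ.le, Real.rpow_add hτ,
      Real.rpow_one, ← Real.sqrt_eq_rpow]
  have hexp : Real.exp (-(d ^ 2 / (8 * τ))) ≤ (d ^ 2 / (8 * τ) + 1)⁻¹ := by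
    rw [Real.exp_neg]
    gcongr
    exact Real.add_one_le_exp _
  calc τ ^ (-(3 : ℝ) / 2) * Real.exp (-(d ^ 2 / (8 * τ)))
      ≤ (τ * √τ)⁻¹ * (d ^ 2 / (8 * τ) + 1)⁻¹ := by rw [hpow]; gcongr
    _ = 8 / (√τ * (8 * τ + d ^ 2)) := by field_simp; ring
    _ ≤ 8 / (√τ * (τ + d ^ 2)) := by gcongr; linarith

theorem heatT_le_div_sqrt_mul {S : ℝ} (hτ : 0 < τ) (hτS : τ ≤ S) :
    heatT τ x ≤ 8 * latticeTheta (Fin 3) ((8 * S)⁻¹ / 4) /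
      (√τ * (τ + Metric.infDist x (Set.range latt3) ^ 2)) := by
  have hS : 0 < (8 * S)⁻¹ / 4 := by have := hτ.trans_le hτS; positivity
  rw [mul_comm 8, mul_div_assoc]
  refine (heatT_le_gaussian x hτ hτS).trans ?_
  gcongr
  · exact (latticeTheta_pos hS).le
  · exact rpow_mul_exp_neg_sq_div_le hτ _

end HeatKernel

section SingularIntegrals

variable {G : ℝ → ℝ}

theorem abs_rpow_sub_rpow_le {a b p : ℝ} (ha : 0 ≤ a) (hb : 0 ≤ b) (hp : 0 ≤ p) (hp1 : p ≤ 1) :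
    |a ^ p - b ^ p| ≤ |a - b| ^ p := by
  wlog hba : b ≤ a generalizing a b
  · rw [abs_sub_comm, abs_sub_comm a]
    exact this hb ha (le_of_not_ge hba)
  have hsub : 0 ≤ a - b := sub_nonneg.2 hba
  rw [abs_of_nonneg hsub, abs_of_nonneg (sub_nonneg.2 (Real.rpow_le_rpow hb hba hp)),
    sub_le_iff_le_add]
  simpa using Real.rpow_add_le_add_rpow hsub hb hp hp1

section PowerBound

variable {M α S : ℝ}

theorem intervalIntegrable_of_abs_le_mul_rpow (hG : Measurable G) (hα : -1 < α)
    (hGM : ∀ t ∈ Set.Ioc 0 S, |G t| ≤ M * t ^ α) {p q : ℝ} (hp : p ∈ Set.Icc 0 S)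
    (hq : q ∈ Set.Icc 0 S) : IntervalIntegrable G volume p q :=
  ((intervalIntegral.intervalIntegrable_rpow' hα).const_mul M).mono_fun' hG.aestronglyMeasurable <|
    (ae_restrict_mem measurableSet_uIoc).mono fun t ht =>
      hGM t ⟨(le_min hp.1 hq.1).trans_lt ht.1, ht.2.trans (max_le hp.2 hq.2)⟩

theorem abs_integral_le_of_abs_le_mul_rpow (hM : 0 ≤ M) (hα : -1 < α) (hα0 : α ≤ 0)
    (hGM : ∀ t ∈ Set.Ioc 0 S, |G t| ≤ M * t ^ α) {p q : ℝ} (hp : p ∈ Set.Icc 0 S)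
    (hq : q ∈ Set.Icc 0 S) : |∫ t in p..q, G t| ≤ M * (|p - q| ^ (α + 1) / (α + 1)) := by
  have hα1 : 0 < α + 1 := by linarith
  calc |∫ t in p..q, G t| = ‖∫ t in p..q, G t‖ := rfl
    _ ≤ |∫ t in p..q, M * t ^ α| :=
        intervalIntegral.norm_integral_le_abs_of_norm_le
          ((ae_restrict_mem measurableSet_uIoc).mono fun t ht =>
            hGM t ⟨(le_min hp.1 hq.1).trans_lt ht.1, ht.2.trans (max_le hp.2 hq.2)⟩)
          ((intervalIntegral.intervalIntegrable_rpow' hα).const_mul M)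
    _ = M * (|q ^ (α + 1) - p ^ (α + 1)| / (α + 1)) := by
        rw [intervalIntegral.integral_const_mul, integral_rpow (.inl hα), abs_mul, abs_div,
          abs_of_nonneg hM, abs_of_pos hα1]
    _ ≤ M * (|p - q| ^ (α + 1) / (α + 1)) := by
        gcongr
        rw [abs_sub_comm p]
        exact abs_rpow_sub_rpow_le hq.1 hp.1 hα1.le (by linarith)

theorem abs_integral_sub_integral_le_of_abs_le_mul_rpow (hG : Measurable G) (hM : 0 ≤ M)
    (hα : -1 < α) (hα0 : α ≤ 0) (hGM : ∀ t ∈ Set.Ioc 0 S, |G t| ≤ M * t ^ α) {a b c d : ℝ}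
    (ha : a ∈ Set.Icc 0 S) (hb : b ∈ Set.Icc 0 S) (hc : c ∈ Set.Icc 0 S) (hd : d ∈ Set.Icc 0 S) :
    |(∫ t in a..b, G t) - ∫ t in c..d, G t| ≤
      M * (|a - c| ^ (α + 1) / (α + 1)) + M * (|b - d| ^ (α + 1) / (α + 1)) := by
  have hint {p q : ℝ} (hp : p ∈ Set.Icc 0 S) (hq : q ∈ Set.Icc 0 S) :
      IntervalIntegrable G volume p q := intervalIntegrable_of_abs_le_mul_rpow hG hα hGM hp hq
  rw [intervalIntegral.integral_interval_sub_interval_comm (hint ha hb) (hint hc hd) (hint ha hc)]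
  exact (abs_sub _ _).trans (add_le_add (abs_integral_le_of_abs_le_mul_rpow hM hα hα0 hGM ha hc)
    (abs_integral_le_of_abs_le_mul_rpow hM hα hα0 hGM hb hd))

end PowerBound

theorem hasDerivAt_arctan_sqrt_div {a t : ℝ} (ha : a ≠ 0) (ht : 0 < t) :
    HasDerivAt (fun u => 2 / a * Real.arctan (√u / a)) (1 / (√t * (t + a ^ 2))) t := by
  refine (((Real.hasDerivAt_sqrt ht.ne').div_const a).arctan.const_mul (2 / a)).congr_deriv ?_
  have : 0 < √t := Real.sqrt_pos.2 ht
  rw [div_pow, Real.sq_sqrt ht.le]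
  field_simp
  ring

theorem integral_le_of_le_div_sqrt_mul_add_sq {K a p q : ℝ} (hK : 0 ≤ K) (ha : 0 < a) (hp : 0 ≤ p)
    (hpq : p ≤ q) (hG : IntervalIntegrable G volume p q)
    (hGK : ∀ t ∈ Set.Ioo p q, G t ≤ K / (√t * (t + a ^ 2))) :
    ∫ t in p..q, G t ≤ K * (Real.pi / a) := by
  have hprimitive (t : ℝ) (ht : t ∈ Set.Ioo p q) :
      HasDerivAt (fun u => K * (2 / a * Real.arctan (√u / a))) (K / (√t * (t + a ^ 2))) t := by
    simpa only [mul_one_div] using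
      (hasDerivAt_arctan_sqrt_div ha.ne' (hp.trans_lt ht.1)).const_mul K
  have hp0 : 0 ≤ Real.arctan (√p / a) := Real.arctan_nonneg.2 (by positivity)
  have hqpi : Real.arctan (√q / a) ≤ Real.pi / 2 := (Real.arctan_lt_pi_div_two _).le
  calc ∫ t in p..q, G t
      ≤ K * (2 / a * Real.arctan (√q / a)) - K * (2 / a * Real.arctan (√p / a)) :=
        intervalIntegral.integral_le_sub_of_hasDeriv_right_of_le hpq (by fun_prop)
          (fun t ht => (hprimitive t ht).hasDerivWithinAt)
          ((intervalIntegrable_iff_integrableOn_Icc_of_le hpq).1 hG) hGK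
    _ = K * (2 / a * (Real.arctan (√q / a) - Real.arctan (√p / a))) := by ring
    _ ≤ K * (2 / a * (Real.pi / 2)) := by gcongr; linarith
    _ = K * (Real.pi / a) := by ring

end SingularIntegrals

section Covariance

variable {x : EuclideanSpace ℝ (Fin 3)} {r s K a S : ℝ}

theorem covK_eq_half_integral (r s : ℝ) (x : EuclideanSpace ℝ (Fin 3)) :
    covK r s x = 2⁻¹ * ∫ τ in |r - s|..(r + s), heatT τ x := by
  have hend : r + s - 2 * min r s = |r - s| := by
    rw [abs_sub_comm, ← max_sub_min_eq_abs, ← max_add_min r s]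
    ring
  rw [covK, intervalIntegral.integral_comp_sub_mul (fun τ => heatT τ x) two_ne_zero, hend,
    mul_zero, sub_zero, smul_eq_mul]

theorem covK_nonneg (hr : 0 ≤ r) (hs : 0 ≤ s) : 0 ≤ covK r s x :=
  intervalIntegral.integral_nonneg (le_min hr hs) fun u hu =>
    heatT_nonneg x (by linarith [le_min_iff.1 hu.2])

theorem abs_heatT_le_mul_rpow {τ : ℝ} (hK : 0 ≤ K) (ha : 0 < a) (hτ : 0 < τ)
    (hG : heatT τ x ≤ K / (√τ * (τ + a ^ 2))) :
    |heatT τ x| ≤ K * a⁻¹ ^ 2 * τ ^ (-(1 / 2) : ℝ) := by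
  have : 0 < √τ := Real.sqrt_pos.2 hτ
  calc |heatT τ x| ≤ K / (√τ * (τ + a ^ 2)) := by rwa [abs_of_nonneg (heatT_nonneg x hτ.le)]
    _ ≤ K / (√τ * a ^ 2) := by gcongr; linarith
    _ = K * a⁻¹ ^ 2 * τ ^ (-(1 / 2) : ℝ) := by
        rw [Real.rpow_neg hτ.le, ← Real.sqrt_eq_rpow]
        field_simp

theorem abs_sub_mem_Icc_of_add_le (hr : 0 ≤ r) (hs : 0 ≤ s) (hrs : r + s ≤ S) :
    |r - s| ∈ Set.Icc 0 S :=
  ⟨abs_nonneg _, (abs_sub_le_of_nonneg_of_le hr (by linarith) hs (by linarith)).trans hrs⟩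

theorem covK_le (hK : 0 ≤ K) (ha : 0 < a)
    (hG : ∀ τ ∈ Set.Ioc 0 S, heatT τ x ≤ K / (√τ * (τ + a ^ 2)))
    (hr : 0 ≤ r) (hs : 0 ≤ s) (hrs : r + s ≤ S) : covK r s x ≤ Real.pi / 2 * K * a⁻¹ := by
  have hdiff : |r - s| ∈ Set.Icc 0 (r + s) := abs_sub_mem_Icc_of_add_le hr hs le_rfl
  have hG' (τ : ℝ) (hτ : τ ∈ Set.Ioc 0 (r + s)) : heatT τ x ≤ K / (√τ * (τ + a ^ 2)) :=
    hG τ ⟨hτ.1, hτ.2.trans hrs⟩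
  have hint : IntervalIntegrable (fun τ => heatT τ x) volume |r - s| (r + s) :=
    intervalIntegrable_of_abs_le_mul_rpow (measurable_heatT x) (by norm_num)
      (fun τ hτ => abs_heatT_le_mul_rpow hK ha hτ.1 (hG' τ hτ)) hdiff ⟨by positivity, le_rfl⟩
  calc covK r s x = 2⁻¹ * ∫ τ in |r - s|..(r + s), heatT τ x := covK_eq_half_integral r s x
    _ ≤ 2⁻¹ * (K * (Real.pi / a)) := by
        gcongr
        exact integral_le_of_le_div_sqrt_mul_add_sq hK ha hdiff.1 hdiff.2 hint
          fun τ hτ => hG' τ ⟨hdiff.1.trans_lt hτ.1, hτ.2.le⟩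
    _ = Real.pi / 2 * K * a⁻¹ := by ring

theorem abs_covK_self_sub_covK_le (hK : 0 ≤ K) (ha : 0 < a)
    (hG : ∀ τ ∈ Set.Ioc 0 S, heatT τ x ≤ K / (√τ * (τ + a ^ 2)))
    (hr : 0 ≤ r) (hs : 0 ≤ s) (hrr : r + r ≤ S) (hrs : r + s ≤ S) :
    |covK r r x - covK r s x| ≤ 2 * K * |r - s| ^ ((1 : ℝ) / 2) * a⁻¹ ^ 2 := by
  have hbound := abs_integral_sub_integral_le_of_abs_le_mul_rpow (measurable_heatT x)
    (by positivity) (by norm_num) (by norm_num)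
    (fun τ hτ => abs_heatT_le_mul_rpow hK ha hτ.1 (hG τ hτ))
    (abs_sub_mem_Icc_of_add_le hr hr hrr) ⟨by positivity, hrr⟩
    (abs_sub_mem_Icc_of_add_le hr hs hrs) ⟨by positivity, hrs⟩
  have hexponent : (-(1 / 2) : ℝ) + 1 = 1 / 2 := by norm_num
  rw [hexponent, sub_self, abs_zero, zero_sub, abs_neg, abs_abs, add_sub_add_left_eq_sub]
    at hbound
  rw [covK_eq_half_integral, covK_eq_half_integral, sub_self, abs_zero, ← mul_sub, abs_mul,
    abs_of_pos (by norm_num : (0 : ℝ) < 2⁻¹)]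
  linarith

end Covariance

theorem stmt_7 (T : ℝ) (hT : 0 < T) :
    ∃ C : ℝ, 0 < C ∧
      ∀ r s : ℝ, r ∈ Set.Icc (0:ℝ) T → s ∈ Set.Icc (0:ℝ) T →
        ∀ x : EuclideanSpace ℝ (Fin 3),
          0 < Metric.infDist x (Set.range latt3) →
          (0 ≤ covK r s x ∧
            covK r s x ≤ C * (Metric.infDist x (Set.range latt3))⁻¹) ∧
          |covK r r x - covK r s x| ≤
            C * |r - s| ^ ((1:ℝ)/2) * ((Metric.infDist x (Set.range latt3))⁻¹) ^ 2 := by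
  set K := 8 * latticeTheta (Fin 3) ((8 * (2 * T))⁻¹ / 4)
  have hK : 0 < K := mul_pos (by norm_num) (latticeTheta_pos (by positivity))
  refine ⟨2 * K, by positivity, fun r s ⟨hr, hrT⟩ ⟨hs, hsT⟩ x hδ => ?_⟩
  have hG (τ : ℝ) (hτ : τ ∈ Set.Ioc 0 (2 * T)) :
      heatT τ x ≤ K / (√τ * (τ + Metric.infDist x (Set.range latt3) ^ 2)) :=
    heatT_le_div_sqrt_mul x hτ.1 hτ.2
  refine ⟨⟨covK_nonneg hr hs, (covK_le hK.le hδ hG hr hs (by linarith)).trans ?_⟩,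
    abs_covK_self_sub_covK_le hK.le hδ hG hr hs (by linarith) (by linarith)⟩
  gcongr
  linarith [Real.pi_le_four]
end
end

section
/- Let X be a topological space and x₀ ∈ X a point such that S := X \ {x₀} is open in X. Let ~ be an equivalence relation on X such that the equivalence class of x₀ is exactly {x₀}, and such that for every x ∈ S the point x₀ lies in the closure of the equivalence class of x. Let π : X → X/~ be the quotient map and equip X/~ with the quotient topology. Then for every subset O ⊆ X/~ with O ≠ X/~: O is open if and only if π(x₀) ∉ O and π⁻¹(O) is open in X (equivalently, since S is open, π⁻¹(O) is open in S). -/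
open Set Topology

section Specialization

variable {X Y : Type*} [TopologicalSpace X] [TopologicalSpace Y]

theorem specializes_of_mem_closure_fiber {f : X → Y} (hf : Continuous f) {x : X} {y : Y}
    (hx : x ∈ closure (f ⁻¹' {y})) : y ⤳ f x :=
  specializes_iff_mem_closure.2 (map_mem_closure hf hx (mapsTo_preimage f {y}))

theorem eq_univ_of_isOpen_of_forall_specializes {U : Set X} {x : X} (hU : IsOpen U)
    (hxU : x ∈ U) (hx : ∀ y, y ⤳ x) : U = univ :=
  eq_univ_of_forall fun y => (hx y).mem_open hU hxU

theorem stmt_9_general {f : X → Y} (hf : IsQuotientMap f) {x₀ : X}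
    (hcl : ∀ y, y ≠ f x₀ → x₀ ∈ closure (f ⁻¹' {y})) {O : Set Y} (hO : O ≠ univ) :
    IsOpen O ↔ f x₀ ∉ O ∧ IsOpen (f ⁻¹' O) := by
  have specializes_image : ∀ y, y ⤳ f x₀ := fun y => by
    obtain rfl | hy := eq_or_ne y (f x₀)
    · exact specializes_rfl
    · exact specializes_of_mem_closure_fiber hf.continuous (hcl y hy)
  have image_notMem (hopen : IsOpen O) : f x₀ ∉ O := fun hmem =>
    hO (eq_univ_of_isOpen_of_forall_specializes hopen hmem specializes_image)
  rw [hf.isOpen_preimage]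
  exact ⟨fun hopen => ⟨image_notMem hopen, hopen⟩, And.right⟩

end Specialization

theorem stmt_9 {X : Type*} [TopologicalSpace X] (x₀ : X)
    (hS : IsOpen ({x₀}ᶜ : Set X)) (s : Setoid X)
    (hclass : ∀ y : X, s.r y x₀ ↔ y = x₀)
    (hcl : ∀ x : X, x ≠ x₀ → x₀ ∈ closure {y : X | s.r y x}) :
    ∀ O : Set (Quotient s), O ≠ Set.univ →
      (IsOpen O ↔ Quotient.mk s x₀ ∉ O ∧ IsOpen (Quotient.mk s ⁻¹' O)) := by
  refine fun O hO => stmt_9_general isQuotientMap_quotient_mk' (Quotient.ind fun x hx => ?_) hO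
  exact closure_mono (fun _ => Quotient.sound) (hcl x (ne_of_apply_ne _ hx))
end

section
/- Let (E,d) be a metric space, let ~ be an equivalence relation on E whose graph {(x,y) ∈ E×E : x ~ y} is closed in E×E, and let F : E → [0,∞] be a lower semicontinuous function such that the sublevel set {x ∈ E : F(x) ≤ R} is compact for every R ∈ [0,∞). Then the function m : E → [0,∞] defined by m(x) := inf{F(y) : y ~ x} is lower semicontinuous. -/
open scoped NNReal ENNReal

/-!
Let `m y` be the infimum of `F` over the points related to `y`. If `a < m y`, choose `c < m y` and
`b > a` such that every value above `c` is at least `b`. The set of points related to some point of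
the compact set `{F ≤ c}` is the projection of a closed set along a compact one, hence closed, and
it misses `y`. Off this closed set, `F > c` at all related points, so `m ≥ b > a` there.
-/

section FiberwiseInfimum

open scoped Topology

variable {X Y α : Type*} [CompleteLinearOrder α]

theorem notMem_image_sublevel_of_lt_biInf {R : SetRel X Y} {F : X → α} {y : Y} {c : α}
    (hc : c < ⨅ x ∈ {x | (x, y) ∈ R}, F x) : y ∉ R.image {x | F x ≤ c} := by
  rintro ⟨x, hxc, hxy⟩
  exact (hc.trans_le (biInf_le F hxy)).not_ge hxc

theorem lowerSemicontinuous_biInf_of_isClosed_image_sublevel [TopologicalSpace Y]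
    {R : SetRel X Y} {F : X → α} (hclosed : ∀ c < ⊤, IsClosed (R.image {x | F x ≤ c})) :
    LowerSemicontinuous fun y => ⨅ x ∈ {x | (x, y) ∈ R}, F x := by
  intro y a ha
  -- When the infimum at `y` covers `a`, it serves as `b`, with `c = a`.
  obtain ⟨b, hab, c, hc, hgap⟩ := LT.lt.exists_disjoint_Iio_Ioi ha
  have hmiss : ∀ᶠ y' in 𝓝 y, y' ∉ R.image {x | F x ≤ c} :=
    (hclosed c hc.lt_top).isOpen_compl.mem_nhds (notMem_image_sublevel_of_lt_biInf hc)
  filter_upwards [hmiss] with y' hy'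
  refine hab.trans_le (le_iInf₂ fun x hxy' => ?_)
  have hcx : c < F x := not_le.1 fun hxc => hy' ⟨x, hxc, hxy'⟩
  exact not_lt.1 fun hxb => (hgap _ hxb _ hcx).false

theorem stmt_10_general [TopologicalSpace X] [TopologicalSpace Y] {R : SetRel X Y} {F : X → α}
    (hR : IsClosed R) (hF : ∀ c < ⊤, IsCompact {x | F x ≤ c}) :
    LowerSemicontinuous fun y => ⨅ x ∈ {x | (x, y) ∈ R}, F x :=
  lowerSemicontinuous_biInf_of_isClosed_image_sublevel fun c hc =>
    hR.relImage_of_isCompact (hF c hc)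

end FiberwiseInfimum

theorem stmt_10 {E : Type*} [MetricSpace E]
    (r : E → E → Prop) (hr : Equivalence r)
    (hgraph : IsClosed {p : E × E | r p.1 p.2})
    (F : E → ℝ≥0∞) (hF : LowerSemicontinuous F)
    (hcpt : ∀ R : ℝ≥0, IsCompact {x : E | F x ≤ R}) :
    LowerSemicontinuous fun x : E => ⨅ y ∈ {y : E | r y x}, F y :=
  stmt_10_general hgraph fun c hc => by
    lift c to ℝ≥0 using hc.ne
    exact hcpt c
end

section
/- Fix n ≥ 1 and let [·,·] denote the commutator of n×n real matrices. Let B₁, B₂, B₃ and g be smooth matrix-valued functions on an open subset U ⊆ ℝ×ℝ³ (coordinates (t,x₁,x₂,x₃)), with g(p) invertible for every p ∈ U, and set h_i := (∂_i g)·g⁻¹ for i = 1,2,3. Assume that on U one has (∂_t g)·g⁻¹ = ∑_{j=1}^{3} ∂_j h_j + ∑_{j=1}^{3} [B_j, h_j]. Then, on U, for each i = 1,2,3: (∂_t − Δ) h_i = −∑_{j=1}^{3} [h_j, ∂_j h_i] + ∑_{j=1}^{3} [[B_j, h_j], h_i] + ∂_i( ∑_{j=1}^{3} [B_j, h_j]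 ), where Δ := ∑_{j=1}^{3} ∂_j²; and moreover (∂_t − Δ) g = ( ∑_{j=1}^{3} [B_j, h_j] − ∑_{j=1}^{3} h_j·h_j )·g. -/
noncomputable section

attribute [local instance] Matrix.normedAddCommGroup Matrix.normedSpace

/-- Space-time domain `ℝ × ℝ³` (coordinates `(t, x₁, x₂, x₃)`). -/
abbrev Dom : Type := ℝ × EuclideanSpace ℝ (Fin 3)

/-- The time derivative `∂_t f` of a matrix-valued function on `ℝ × ℝ³`. -/
def Dt {n : ℕ} (f : Dom → Matrix (Fin n) (Fin n) ℝ) (q : Dom) : Matrix (Fin n) (Fin n) ℝ :=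
  fderiv ℝ f q ((1 : ℝ), (0 : EuclideanSpace ℝ (Fin 3)))

/-- The spatial derivative `∂_j f` of a matrix-valued function on `ℝ × ℝ³`. -/
def Dx {n : ℕ} (j : Fin 3) (f : Dom → Matrix (Fin n) (Fin n) ℝ) (q : Dom) :
    Matrix (Fin n) (Fin n) ℝ :=
  fderiv ℝ f q ((0 : ℝ), EuclideanSpace.single j 1)

/-!
The logarithmic derivatives `h_v = (∂_v g) g⁻¹` of a single map `g` satisfy the zero-curvature
identity `∂_v h_w - ∂_w h_v = [h_v, h_w]`, because the second derivatives of `g` are symmetric.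
Used with `v` the time direction and `w` a spatial direction `i`, it turns
`h_t = ∑ ∂_j h_j + F` into an equation for `∂_t h_i` whose top-order term is `∂_i ∑ ∂_j h_j`.
Used with two spatial directions, it turns that gradient of a divergence into `∑ ∂_j² h_i` up to
commutators.

The argument runs in a Banach algebra. The supremum norm on matrices is not submultiplicative, so
matrices are given the `L∞` operator norm; `fderiv` depends only on the topology.
-/

open scoped Topology ContDiff

section LogarithmicDerivative

attribute [local instance] LieRing.ofAssociativeRing

variable {𝕜 E A ι : Type*} [NontriviallyNormedField 𝕜] [NormedAddCommGroup E] [NormedSpace 𝕜 E]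
  [NormedRing A] [NormedAlgebra 𝕜 A] {g : E → A} {x : E}

theorem fderiv_lie_apply {a b : E → A} (ha : DifferentiableAt 𝕜 a x)
    (hb : DifferentiableAt 𝕜 b x) (v : E) :
    fderiv 𝕜 (fun y ↦ ⁅a y, b y⁆) x v = ⁅fderiv 𝕜 a x v, b x⁆ + ⁅a x, fderiv 𝕜 b x v⁆ := by
  simp only [Ring.lie_def]
  rw [fderiv_fun_sub (ha.fun_mul hb) (hb.fun_mul ha), fderiv_fun_mul' ha hb, fderiv_fun_mul' hb ha]
  simp only [sub_apply, add_apply, smul_apply, smul_eq_mul, MulOpposite.smul_eq_mul_unop,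
    MulOpposite.unop_op]
  abel

theorem contDiffAt_fderiv_apply {F : Type*} [NormedAddCommGroup F] [NormedSpace 𝕜 F] {f : E → F}
    {m n : ℕ∞ω} (hf : ContDiffAt 𝕜 n f x) (hmn : m + 1 ≤ n) (v : E) :
    ContDiffAt 𝕜 m (fun y ↦ fderiv 𝕜 f y v) x :=
  (hf.fderiv_right hmn).clm_apply contDiffAt_const

theorem fderiv_fderiv_apply_comm [IsRCLikeNormedField 𝕜] {F : Type*} [NormedAddCommGroup F]
    [NormedSpace 𝕜 F] {f : E → F} (hf : ContDiffAt 𝕜 2 f x) (v w : E) :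
    fderiv 𝕜 (fun y ↦ fderiv 𝕜 f y w) x v = fderiv 𝕜 (fun y ↦ fderiv 𝕜 f y v) x w := by
  have hf' : DifferentiableAt 𝕜 (fderiv 𝕜 f) x :=
    (hf.fderiv_right (m := 1) (by norm_num)).differentiableAt one_ne_zero
  have key (v w : E) :
      fderiv 𝕜 (fun y ↦ fderiv 𝕜 f y w) x v = fderiv 𝕜 (fderiv 𝕜 f) x v w := by
    simp [fderiv_clm_apply hf' (differentiableAt_const w)]
  rw [key, key, (hf.isSymmSndFDerivAt (by simp)).eq]

variable (𝕜) in
/-- The right logarithmic derivative `(∂_v g) g⁻¹` of an algebra-valued map `g` in the direction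
`v`, as a function of the base point; the paper's `h_i` is the case `v = e_i`. The inverse is
`Ring.inverse`, which is `0` at non-units. -/
def rightLogDeriv (g : E → A) (v x : E) : A :=
  fderiv 𝕜 g x v * Ring.inverse (g x)

theorem rightLogDeriv_mul_self (hx : IsUnit (g x)) (v : E) :
    rightLogDeriv 𝕜 g v x * g x = fderiv 𝕜 g x v := by
  rw [rightLogDeriv, mul_assoc, Ring.inverse_mul_cancel _ hx, mul_one]

variable [HasSummableGeomSeries A]

theorem contDiffAt_rightLogDeriv {m n : ℕ∞ω} (hg : ContDiffAt 𝕜 n g x) (hmn : m + 1 ≤ n)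
    (hx : IsUnit (g x)) (v : E) : ContDiffAt 𝕜 m (rightLogDeriv 𝕜 g v) x := by
  have hinv : ContDiffAt 𝕜 m Ring.inverse (g x) := hx.unit_spec ▸ contDiffAt_ringInverse 𝕜 hx.unit
  exact (contDiffAt_fderiv_apply hg hmn v).mul (hinv.comp x (hg.of_le (le_self_add.trans hmn)))

theorem differentiableAt_rightLogDeriv (hg : ContDiffAt 𝕜 2 g x) (hx : IsUnit (g x)) (v : E) :
    DifferentiableAt 𝕜 (rightLogDeriv 𝕜 g v) x :=
  (contDiffAt_rightLogDeriv (m := 1) hg (by norm_num) hx v).differentiableAt one_ne_zero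

theorem differentiableAt_fderiv_rightLogDeriv (hg : ContDiffAt 𝕜 3 g x) (hx : IsUnit (g x))
    (v w : E) : DifferentiableAt 𝕜 (fun y ↦ fderiv 𝕜 (rightLogDeriv 𝕜 g v) y w) x :=
  (contDiffAt_fderiv_apply (m := 1) (n := 2) (contDiffAt_rightLogDeriv hg (by norm_num) hx v)
    (by norm_num) w).differentiableAt one_ne_zero

theorem eventually_isUnit (hg : ContinuousAt g x) (hx : IsUnit (g x)) :
    ∀ᶠ y in 𝓝 x, IsUnit (g y) :=
  hg.eventually_mem (Units.isOpen.mem_nhds hx)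

theorem fderiv_fderiv_apply_eq_mul (hg : ContDiffAt 𝕜 2 g x) (hx : IsUnit (g x)) (v w : E) :
    fderiv 𝕜 (fun y ↦ fderiv 𝕜 g y w) x v =
      (fderiv 𝕜 (rightLogDeriv 𝕜 g w) x v + rightLogDeriv 𝕜 g w x * rightLogDeriv 𝕜 g v x) *
        g x := by
  have hmul : (fun y ↦ fderiv 𝕜 g y w) =ᶠ[𝓝 x] fun y ↦ rightLogDeriv 𝕜 g w y * g y := by
    filter_upwards [eventually_isUnit hg.continuousAt hx] with y hy
    exact (rightLogDeriv_mul_self hy w).symm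
  rw [hmul.fderiv_eq, fderiv_fun_mul' (differentiableAt_rightLogDeriv hg hx w)
    (hg.differentiableAt two_ne_zero), add_mul, mul_assoc, rightLogDeriv_mul_self hx]
  simp [add_comm]

variable [Fintype ι] {e : ι → E} {τ : E}

theorem fderiv_sub_laplacian_eq_mul (hg : ContDiffAt 𝕜 2 g x) (hx : IsUnit (g x)) {f : A}
    (hflow : rightLogDeriv 𝕜 g τ x = ∑ j, fderiv 𝕜 (rightLogDeriv 𝕜 g (e j)) x (e j) + f) :
    fderiv 𝕜 g x τ - ∑ j, fderiv 𝕜 (fun y ↦ fderiv 𝕜 g y (e j)) x (e j) =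
      (f - ∑ j, rightLogDeriv 𝕜 g (e j) x * rightLogDeriv 𝕜 g (e j) x) * g x := by
  simp only [← rightLogDeriv_mul_self hx τ, hflow, fderiv_fderiv_apply_eq_mul hg hx,
    ← Finset.sum_mul, Finset.sum_add_distrib]
  noncomm_ring

variable [IsRCLikeNormedField 𝕜]

theorem fderiv_rightLogDeriv_swap (hg : ContDiffAt 𝕜 2 g x) (hx : IsUnit (g x)) (v w : E) :
    fderiv 𝕜 (rightLogDeriv 𝕜 g w) x v =
      fderiv 𝕜 (rightLogDeriv 𝕜 g v) x w + ⁅rightLogDeriv 𝕜 g v x, rightLogDeriv 𝕜 g w x⁆ := by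
  have hsymm := fderiv_fderiv_apply_comm hg v w
  rw [fderiv_fderiv_apply_eq_mul hg hx, fderiv_fderiv_apply_eq_mul hg hx] at hsymm
  rw [Ring.lie_def, ← add_sub_assoc]
  exact eq_sub_of_add_eq (hx.mul_right_cancel hsymm)

theorem fderiv_fderiv_rightLogDeriv (hg : ContDiffAt 𝕜 3 g x) (hx : IsUnit (g x)) (v w : E) :
    fderiv 𝕜 (fun y ↦ fderiv 𝕜 (rightLogDeriv 𝕜 g w) y w) x v =
      fderiv 𝕜 (fun y ↦ fderiv 𝕜 (rightLogDeriv 𝕜 g v) y w) x w -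
        ⁅rightLogDeriv 𝕜 g w x, fderiv 𝕜 (rightLogDeriv 𝕜 g v) x w⁆ -
        ⁅fderiv 𝕜 (rightLogDeriv 𝕜 g w) x w, rightLogDeriv 𝕜 g v x⁆ := by
  have hg₂ : ContDiffAt 𝕜 2 g x := hg.of_le (by norm_num)
  have hLw : ContDiffAt 𝕜 2 (rightLogDeriv 𝕜 g w) x :=
    contDiffAt_rightLogDeriv hg (by norm_num) hx w
  have hL (u : E) : DifferentiableAt 𝕜 (rightLogDeriv 𝕜 g u) x :=
    differentiableAt_rightLogDeriv hg₂ hx u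
  have hlie : DifferentiableAt 𝕜 (fun y ↦ ⁅rightLogDeriv 𝕜 g v y, rightLogDeriv 𝕜 g w y⁆) x :=
    ((hL v).mul (hL w)).sub ((hL w).mul (hL v))
  have hswap : (fun y ↦ fderiv 𝕜 (rightLogDeriv 𝕜 g w) y v) =ᶠ[𝓝 x] fun y ↦
      fderiv 𝕜 (rightLogDeriv 𝕜 g v) y w + ⁅rightLogDeriv 𝕜 g v y, rightLogDeriv 𝕜 g w y⁆ := by
    filter_upwards [eventually_isUnit hg.continuousAt hx, hg₂.eventually (by simp)] with y hy hgy
    exact fderiv_rightLogDeriv_swap hgy hy v w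
  rw [fderiv_fderiv_apply_comm hLw, hswap.fderiv_eq,
    fderiv_fun_add (differentiableAt_fderiv_rightLogDeriv hg hx v w) hlie, add_apply,
    fderiv_lie_apply (hL v) (hL w), ← lie_skew (rightLogDeriv 𝕜 g w x),
    ← lie_skew _ (rightLogDeriv 𝕜 g v x)]
  abel

theorem fderiv_sum_fderiv_rightLogDeriv (hg : ContDiffAt 𝕜 3 g x) (hx : IsUnit (g x)) (v : E) :
    fderiv 𝕜 (fun y ↦ ∑ j, fderiv 𝕜 (rightLogDeriv 𝕜 g (e j)) y (e j)) x v =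
      ∑ j, fderiv 𝕜 (fun y ↦ fderiv 𝕜 (rightLogDeriv 𝕜 g v) y (e j)) x (e j) -
        ∑ j, ⁅rightLogDeriv 𝕜 g (e j) x, fderiv 𝕜 (rightLogDeriv 𝕜 g v) x (e j)⁆ -
        ⁅∑ j, fderiv 𝕜 (rightLogDeriv 𝕜 g (e j)) x (e j), rightLogDeriv 𝕜 g v x⁆ := by
  have hdiff (j : ι) : DifferentiableAt 𝕜 (fun y ↦ fderiv 𝕜 (rightLogDeriv 𝕜 g (e j)) y (e j)) x :=
    differentiableAt_fderiv_rightLogDeriv hg hx (e j) (e j)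
  rw [fderiv_fun_sum fun j _ ↦ hdiff j, sum_apply, sum_lie,
    ← Finset.sum_sub_distrib, ← Finset.sum_sub_distrib]
  exact Finset.sum_congr rfl fun j _ ↦ fderiv_fderiv_rightLogDeriv hg hx v (e j)

theorem fderiv_rightLogDeriv_sub_laplacian {F : E → A} (hg : ContDiffAt 𝕜 3 g x)
    (hx : IsUnit (g x)) (hF : DifferentiableAt 𝕜 F x)
    (hflow : rightLogDeriv 𝕜 g τ =ᶠ[𝓝 x] fun y ↦
      ∑ j, fderiv 𝕜 (rightLogDeriv 𝕜 g (e j)) y (e j) + F y) (v : E) :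
    fderiv 𝕜 (rightLogDeriv 𝕜 g v) x τ -
        ∑ j, fderiv 𝕜 (fun y ↦ fderiv 𝕜 (rightLogDeriv 𝕜 g v) y (e j)) x (e j) =
      -∑ j, ⁅rightLogDeriv 𝕜 g (e j) x, fderiv 𝕜 (rightLogDeriv 𝕜 g v) x (e j)⁆ +
        ⁅F x, rightLogDeriv 𝕜 g v x⁆ + fderiv 𝕜 F x v := by
  have hdiv : DifferentiableAt 𝕜
      (fun y ↦ ∑ j, fderiv 𝕜 (rightLogDeriv 𝕜 g (e j)) y (e j)) x :=
    .fun_sum fun j _ ↦ differentiableAt_fderiv_rightLogDeriv hg hx (e j) (e j)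
  rw [fderiv_rightLogDeriv_swap (hg.of_le (by norm_num)) hx τ v, hflow.fderiv_eq, hflow.eq_of_nhds,
    fderiv_fun_add hdiv hF, add_apply, fderiv_sum_fderiv_rightLogDeriv hg hx, add_lie]
  abel

theorem stmt_12_general {U : Set E} (hU : IsOpen U) {B : ι → E → A}
    (hB : ∀ j, DifferentiableOn 𝕜 (B j) U) (hg : ContDiffOn 𝕜 3 g U)
    (hginv : ∀ q ∈ U, IsUnit (g q)) {h : ι → E → A}
    (hdef : ∀ i, h i = rightLogDeriv 𝕜 g (e i))
    (heq : ∀ q ∈ U, rightLogDeriv 𝕜 g τ q =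
      ∑ j, fderiv 𝕜 (h j) q (e j) + ∑ j, ⁅B j q, h j q⁆) :
    (∀ q ∈ U, ∀ i,
      fderiv 𝕜 (h i) q τ - ∑ j, fderiv 𝕜 (fun y ↦ fderiv 𝕜 (h i) y (e j)) q (e j) =
        -∑ j, ⁅h j q, fderiv 𝕜 (h i) q (e j)⁆ + ∑ j, ⁅⁅B j q, h j q⁆, h i q⁆ +
          fderiv 𝕜 (fun y ↦ ∑ j, ⁅B j y, h j y⁆) q (e i)) ∧
    (∀ q ∈ U,
      fderiv 𝕜 g q τ - ∑ j, fderiv 𝕜 (fun y ↦ fderiv 𝕜 g y (e j)) q (e j) =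
        (∑ j, ⁅B j q, h j q⁆ - ∑ j, h j q * h j q) * g q) := by
  simp only [hdef] at heq ⊢
  have hg₃ {q : E} (hq : q ∈ U) : ContDiffAt 𝕜 3 g q := hg.contDiffAt (hU.mem_nhds hq)
  have hg₂ {q : E} (hq : q ∈ U) : ContDiffAt 𝕜 2 g q := (hg₃ hq).of_le (by norm_num)
  refine ⟨fun q hq i ↦ ?_, fun q hq ↦ fderiv_sub_laplacian_eq_mul (hg₂ hq) (hginv q hq) (heq q hq)⟩
  have hforce : DifferentiableAt 𝕜 (fun y ↦ ∑ j, ⁅B j y, rightLogDeriv 𝕜 g (e j) y⁆) q :=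
    .fun_sum fun j _ ↦
      have hBj := (hB j).differentiableAt (hU.mem_nhds hq)
      have hL := differentiableAt_rightLogDeriv (hg₂ hq) (hginv q hq) (e j)
      (hBj.mul hL).sub (hL.mul hBj)
  rw [← sum_lie]
  exact fderiv_rightLogDeriv_sub_laplacian (hg₃ hq) (hginv q hq) hforce
    (Filter.eventuallyEq_of_mem (hU.mem_nhds hq) heq) (e i)

end LogarithmicDerivative

section MatrixNorm

open scoped Matrix.Norms.Operator

/-- The norm on matrices here is the `L∞` operator norm. -/
theorem contDiffOn_matrix_of_entries {𝕜 E m n : Type*} [NontriviallyNormedField 𝕜]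
    [NormedAddCommGroup E] [NormedSpace 𝕜 E] [Fintype m] [Fintype n]
    {f : E → Matrix m n 𝕜} {U : Set E} {k : ℕ∞ω}
    (hf : ∀ i j, ContDiffOn 𝕜 k (fun q ↦ f q i j) U) : ContDiffOn 𝕜 k f U := by
  classical
  have hsum : f = fun q ↦ ∑ i, ∑ j, f q i j • Matrix.single i j (1 : 𝕜) := by
    funext q
    simpa only [Matrix.smul_single, smul_eq_mul, mul_one] using Matrix.matrix_eq_sum_single (f q)
  rw [hsum]
  exact .sum fun i _ ↦ .sum fun j _ ↦ (hf i j).smul contDiffOn_const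

end MatrixNorm

theorem stmt_12 (n : ℕ) (U : Set Dom) (hU : IsOpen U)
    (B : Fin 3 → Dom → Matrix (Fin n) (Fin n) ℝ) (g : Dom → Matrix (Fin n) (Fin n) ℝ)
    (hB : ∀ j, ContDiffOn ℝ (⊤ : ℕ∞) (B j) U) (hg : ContDiffOn ℝ (⊤ : ℕ∞) g U)
    (hginv : ∀ q ∈ U, IsUnit (g q))
    (h : Fin 3 → Dom → Matrix (Fin n) (Fin n) ℝ)
    (hdef : ∀ (i : Fin 3) (q : Dom), h i q = Dx i g q * (g q)⁻¹)
    (heq : ∀ q ∈ U, Dt g q * (g q)⁻¹ =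
      (∑ j, Dx j (h j) q) + ∑ j, (B j q * h j q - h j q * B j q)) :
    (∀ q ∈ U, ∀ i : Fin 3,
      Dt (h i) q - ∑ j, Dx j (Dx j (h i)) q =
        -(∑ j, (h j q * Dx j (h i) q - Dx j (h i) q * h j q)) +
          (∑ j, ((B j q * h j q - h j q * B j q) * h i q -
            h i q * (B j q * h j q - h j q * B j q))) +
          Dx i (fun q' => ∑ j, (B j q' * h j q' - h j q' * B j q')) q) ∧
    (∀ q ∈ U,
      Dt g q - ∑ j, Dx j (Dx j g) q =
        ((∑ j, (B j q * h j q - h j q * B j q)) - ∑ j, h j q * h j q) * g q) := by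
  have hB' (j : Fin 3) : DifferentiableOn ℝ (B j) U := (hB j).differentiableOn (by simp)
  have hg₃ : ContDiffOn ℝ 3 g U := hg.of_le (WithTop.coe_le_coe.2 (le_top : (3 : ℕ∞) ≤ ⊤))
  have hentries (k l : Fin n) : ContDiffOn ℝ 3 (fun q ↦ g q k l) U :=
    contDiffOn_pi.1 (contDiffOn_pi.1 hg₃ k) l
  simp only [Matrix.nonsing_inv_eq_ringInverse] at hdef heq
  open scoped Matrix.Norms.Operator in
  exact stmt_12_general hU hB' (contDiffOn_matrix_of_entries hentries) hginv
    (fun i ↦ funext (hdef i)) heq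
end
end
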